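/- Let $b>0$, let $F(p):=\sqrt{|p|^2+b|p|^4}$ for $p\in\mathbb{R}^2$, let $p_0\in\mathbb{R}^2\setminus\{(0,0)\}$ and $\tilde A\in\mathbb{R}$. Consider the problem of minimizing $$E(\gamma):=\int_s^e F(\gamma(t))\,|\gamma'(t)|\,dt\in[0,\infty]$$ over all curves $\gamma=(\gamma^1,\gamma^2):[s,e]\to\mathbb{R}^2$, on an arbitrary compact parameter interval, that are continuous on $[s,e]$ and locally Lipschitz on $[s,e)$ (so that curves of infinite Euclidean length that spiral into the origin are allowed), with $\gamma(s)=p_0$, $\gamma(e)=(0,0)$ and $$\tilde{\mathcal A}(\gamma):=\frac12\int_s^e\big(\gamma^1(\gamma^2)'-\gamma^2(\gamma^1)'\big)\,dt=\tilde A,$$ the last integral being required to converge absolutely. Then a minimizer exists if and only if $$|\tilde A|\le\frac{|p_0|}{2\sqrt b}.$$ -/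

import Mathlib

open MeasureTheory Set

noncomputable section

namespace OneWell

/-- The Euclidean plane. -/
abbrev Plane : Type := EuclideanSpace ℝ (Fin 2)

/-- The conformal factor `F(p) = √(|p|² + b|p|⁴)`. -/
def factor (b : ℝ) (p : Plane) : ℝ := Real.sqrt (‖p‖ ^ 2 + b * ‖p‖ ^ 4)

/-- The energy `E(γ) = ∫ F(γ(t)) |γ'(t)| dt` over `[s, e]`, a value in `[0, ∞]`.
(A locally Lipschitz curve is differentiable almost everywhere.) -/
def energy (b s e : ℝ) (γ : ℝ → Plane) : ENNReal :=
  ∫⁻ t in Icc s e, ENNReal.ofReal (factor b (γ t) * ‖deriv γ t‖)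

/-- The density `½ (γ¹ (γ²)' − γ² (γ¹)')` of the form `ω₁ = ½ r² dθ` along `γ`. -/
def areaDensity (γ : ℝ → Plane) (t : ℝ) : ℝ :=
  (1 / 2) * (γ t 0 * deriv γ t 1 - γ t 1 * deriv γ t 0)

/-- The admissible curves `γ : [s, e] → ℝ²` for the starting point `p₀` and the area `A`.
Only the values of `γ` on `[s, e]` matter. The curve is continuous on `[s, e]`, it is locally
Lipschitz on `[s, e)`, that is, up to but not necessarily at the time at which it ends in the
well (so its Euclidean length may be infinite), and its area integral converges absolutely. -/
structure Admissible (p₀ : Plane) (A s e : ℝ) (γ : ℝ → Plane) : Prop where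
  le : s ≤ e
  continuousOn : ContinuousOn γ (Icc s e)
  locallyLipschitzOn : LocallyLipschitzOn (Ico s e) γ
  start_eq : γ s = p₀
  end_eq : γ e = 0
  area_integrable : IntegrableOn (areaDensity γ) (Icc s e)
  area_eq : ∫ t in Icc s e, areaDensity γ t = A

/-- `γ` on `[s, e]` minimizes the energy among all admissible curves (with the same starting
point and the same area, on any parameter interval). -/
def IsMinimizer (b : ℝ) (p₀ : Plane) (A s e : ℝ) (γ : ℝ → Plane) : Prop :=
  Admissible p₀ A s e γ ∧
    ∀ (s' e' : ℝ) (ζ : ℝ → Plane), Admissible p₀ A s' e' ζ → energy b s e γ ≤ energy b s' e' ζ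

end OneWell

end

/-!
For `k ^ 2 ≤ 1` the form `k r² dθ − √(1 − k² + b r²) r dr` calibrates the metric: the square
of `F |v|` is the sum of the squares of this form and of an orthogonal one. Its integral along a
curve from `p₀` to the origin depends only on `p₀` and on the area, hence bounds the energy of every
competitor from below, and the spirals that annihilate the orthogonal form attain the bound. As `k`
runs through `[-1, 1]`, their areas fill the interval of all `A` with `|A| ≤ |p₀| / (2 √b)`.

Beyond this interval the bound for `k = ±1` is still the infimum, because the missing area can be
swept arbitrarily close to the origin at vanishing extra cost. A curve attaining it would annihilate
the orthogonal form, which for `k = ±1` means `dr = -2 k √b dA`, and so would have area of modulus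
exactly `|p₀| / (2 √b)`.
-/

namespace OneWell

open Filter Real

section Interval

variable {a b : ℝ}

theorem ae_restrict_Icc_mem_Ioo (μ : Measure ℝ) [NullSingletonClass μ] :
    ∀ᵐ t ∂μ.restrict (Icc a b), t ∈ Ioo a b := by
  rw [← restrict_Ioo_eq_restrict_Icc]
  exact ae_restrict_mem measurableSet_Ioo

theorem integrableOn_Icc_comp_sub_left {E : Type*} [NormedAddCommGroup E] {g : ℝ → E} {R : ℝ}
    (hR : 0 ≤ R) (hg : IntervalIntegrable g volume 0 R) :
    IntegrableOn (fun t => g (R - t)) (Icc 0 R) := by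
  rw [← intervalIntegrable_iff_integrableOn_Icc_of_le hR]
  simpa using (hg.comp_sub_left R).symm

theorem integral_Icc_comp_sub_left {E : Type*} [NormedAddCommGroup E] [NormedSpace ℝ E]
    (g : ℝ → E) {R : ℝ} (hR : 0 ≤ R) : ∫ t in Icc 0 R, g (R - t) = ∫ r in 0..R, g r := by
  rw [integral_Icc_eq_integral_Ioc, ← intervalIntegral.integral_of_le hR,
    intervalIntegral.integral_comp_sub_left, sub_self, sub_zero]

theorem locallyLipschitzOn_comp {α β γ : Type*} [PseudoEMetricSpace α] [PseudoEMetricSpace β]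
    [PseudoEMetricSpace γ] {f : α → β} {g : β → γ} {s : Set α} (hg : LocallyLipschitz g)
    (hf : LocallyLipschitzOn s f) : LocallyLipschitzOn s (fun x => g (f x)) := by
  rw [locallyLipschitzOn_iff_restrict] at hf ⊢
  exact hg.comp hf

theorem locallyBoundedVariationOn_of_locallyLipschitzOn {E : Type*} [PseudoMetricSpace E]
    {f : ℝ → E} {s : Set ℝ} [s.OrdConnected] (hf : LocallyLipschitzOn s f) :
    LocallyBoundedVariationOn f s := by
  intro a b ha hb
  have hsub : Icc a b ⊆ s := s.Icc_subset ha hb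
  obtain ⟨K, hK⟩ := (hf.mono hsub).exists_lipschitzOnWith_of_compact isCompact_Icc
  rw [inter_eq_right.2 hsub]
  rcases le_or_gt a b with hab | hab
  · simpa only [inter_self] using
      hK.locallyBoundedVariationOn a b (left_mem_Icc.2 hab) (right_mem_Icc.2 hab)
  · simp [Icc_eq_empty hab.not_ge, BoundedVariationOn]

theorem ae_differentiableAt_of_locallyLipschitzOn_Ico {V : Type*} [NormedAddCommGroup V]
    [NormedSpace ℝ V] [FiniteDimensional ℝ V] {f : ℝ → V} (hf : LocallyLipschitzOn (Ico a b) f) :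
    ∀ᵐ t ∂volume.restrict (Icc a b), DifferentiableAt ℝ f t := by
  filter_upwards [ae_restrict_Icc_mem_Ioo volume, ae_restrict_of_ae
    (locallyBoundedVariationOn_of_locallyLipschitzOn hf).ae_differentiableWithinAt_of_mem]
    with t ht hdiff
  exact (hdiff (Ioo_subset_Ico_self ht)).differentiableAt (Ico_mem_nhds ht.1 ht.2)

theorem integral_deriv_eq_sub_of_lipschitzOnWith {f : ℝ → ℝ} {K : NNReal} (hab : a ≤ b)
    (hf : LipschitzOnWith K f (Icc a b)) : ∫ t in Icc a b, deriv f t = f b - f a := by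
  rw [← uIcc_of_le hab] at hf
  rw [integral_Icc_eq_integral_Ioc, ← intervalIntegral.integral_of_le hab]
  exact hf.absolutelyContinuousOnInterval.integral_deriv_eq_sub

theorem integral_deriv_eq_sub_of_locallyLipschitzOn_Ico {f : ℝ → ℝ} (hab : a ≤ b)
    (hc : ContinuousOn f (Icc a b)) (hl : LocallyLipschitzOn (Ico a b) f)
    (hi : IntegrableOn (deriv f) (Icc a b)) : ∫ t in Icc a b, deriv f t = f b - f a := by
  rcases hab.eq_or_lt with rfl | hlt
  · simp
  have hIco : EqOn (fun x => ∫ t in Icc a x, deriv f t) (fun x => f x - f a) (Ico a b) := by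
    intro x hx
    obtain ⟨K, hK⟩ :=
      (hl.mono (Icc_subset_Ico_right hx.2)).exists_lipschitzOnWith_of_compact isCompact_Icc
    exact integral_deriv_eq_sub_of_lipschitzOnWith hx.1 hK
  have hIcc : EqOn (fun x => ∫ t in Icc a x, deriv f t) (fun x => f x - f a) (Icc a b) :=
    hIco.of_subset_closure (intervalIntegral.continuousOn_primitive_Icc hi)
      (hc.sub continuousOn_const) Ico_subset_Icc_self (closure_Ico hlt.ne).ge
  exact hIcc (right_mem_Icc.2 hab)

end Interval

section InnerProductSpace

theorem deriv_norm_comp_of_eq_zero {V : Type*} [SeminormedAddCommGroup V] {γ : ℝ → V}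
    {t : ℝ} (h0 : γ t = 0) : deriv (fun τ => ‖γ τ‖) t = 0 :=
  IsLocalMin.deriv_eq_zero (Eventually.of_forall fun τ => by simp [h0])

variable {V : Type*} [NormedAddCommGroup V] [InnerProductSpace ℝ V]

theorem hasDerivAt_norm_comp {γ : ℝ → V} {v : V} {t : ℝ} (h : HasDerivAt γ v t) (h0 : γ t ≠ 0) :
    HasDerivAt (fun τ => ‖γ τ‖) (inner ℝ (γ t) v / ‖γ t‖) t := by
  have hsqrt := h.norm_sq.sqrt (pow_ne_zero 2 (norm_ne_zero_iff.2 h0))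
  simp only [sqrt_sq (norm_nonneg _)] at hsqrt
  exact hsqrt.congr_deriv (mul_div_mul_left _ _ two_ne_zero)

variable [Fact (Module.finrank ℝ V = 2)] (o : Orientation ℝ V (Fin 2)) (x : V)

theorem hasDerivAt_rotation (θ : ℝ) :
    HasDerivAt (fun φ : ℝ => o.rotation φ x) (o.rightAngleRotation (o.rotation θ x)) θ := by
  simp only [Orientation.rotation_apply, Angle.cos_coe, Angle.sin_coe]
  refine (((hasDerivAt_cos θ).smul_const x).add
    ((hasDerivAt_sin θ).smul_const (o.rightAngleRotation x))).congr_deriv ?_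
  simp [add_comm]

theorem contDiff_rotation {n : WithTop ℕ∞} : ContDiff ℝ n (fun φ : ℝ => o.rotation φ x) := by
  simp only [Orientation.rotation_apply, Angle.cos_coe, Angle.sin_coe]
  fun_prop

end InnerProductSpace

instance fact_finrank_plane : Fact (Module.finrank ℝ Plane = 2) := ⟨finrank_euclideanSpace_fin⟩

/-- The standard orientation of the plane, for which `(e₁, e₂)` is a positive basis. -/
noncomputable abbrev planeOrientation : Orientation ℝ Plane (Fin 2) :=
  (EuclideanSpace.basisFun (Fin 2) ℝ).toBasis.orientation

local notation "ω" => planeOrientation.areaForm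
local notation "J" => planeOrientation.rightAngleRotation

theorem areaForm_plane (p v : Plane) : ω p v = p 0 * v 1 - p 1 * v 0 := by
  rw [Orientation.areaForm_to_volumeForm,
    planeOrientation.volumeForm_robust (EuclideanSpace.basisFun (Fin 2) ℝ) rfl,
    Module.Basis.det_apply, Matrix.det_fin_two]
  simp [Module.Basis.toMatrix_apply, mul_comm]

theorem areaDensity_eq_areaForm (γ : ℝ → Plane) (t : ℝ) :
    areaDensity γ t = 1 / 2 * ω (γ t) (deriv γ t) := by
  rw [areaForm_plane, areaDensity]

theorem factor_nonneg (b : ℝ) (p : Plane) : 0 ≤ factor b p := sqrt_nonneg _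

theorem factor_sq {b : ℝ} (hb : 0 ≤ b) (p : Plane) : factor b p ^ 2 = ‖p‖ ^ 2 + b * ‖p‖ ^ 4 :=
  sq_sqrt (by positivity)

theorem continuous_factor (b : ℝ) : Continuous (factor b) := by
  unfold factor
  fun_prop

section Calibration

variable {b k : ℝ}

/-- The coefficient `√(1 − k² + b r²)` of the radial form `r dr` in the calibration with
multiplier `k`. -/
noncomputable def radialWeight (b k r : ℝ) : ℝ := √(1 - k ^ 2 + b * r ^ 2)

/-- A primitive of `radialWeight b k r * r`. -/
noncomputable def potential (b k r : ℝ) : ℝ := (1 - k ^ 2 + b * r ^ 2) ^ (3 / 2 : ℝ) / (3 * b)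

/-- The calibrating form `k r² dθ − √(1 − k² + b r²) r dr` at the point `p`, applied to `v`. -/
noncomputable def calibration (b k : ℝ) (p v : Plane) : ℝ :=
  k * ω p v - radialWeight b k ‖p‖ * inner ℝ p v

/-- The form orthogonal to `calibration b k`, which vanishes on the calibrated directions. -/
noncomputable def conjugateCalibration (b k : ℝ) (p v : Plane) : ℝ :=
  k * inner ℝ p v + radialWeight b k ‖p‖ * ω p v

/-- The integral of the calibration along every admissible curve of finite energy that starts
at distance `R` from the origin and has area `A`. -/
noncomputable def calibratedEnergy (b k R A : ℝ) : ℝ :=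
  2 * k * A + (potential b k R - potential b k 0)

theorem continuous_radialWeight (b k : ℝ) : Continuous (radialWeight b k) := by
  unfold radialWeight
  fun_prop

theorem radicand_nonneg (hb : 0 ≤ b) (hk : k ^ 2 ≤ 1) (r : ℝ) : 0 ≤ 1 - k ^ 2 + b * r ^ 2 :=
  add_nonneg (sub_nonneg.2 hk) (by positivity)

theorem radicand_pos (hb : 0 < b) (hk : k ^ 2 ≤ 1) {r : ℝ} (hr : r ≠ 0) :
    0 < 1 - k ^ 2 + b * r ^ 2 :=
  add_pos_of_nonneg_of_pos (sub_nonneg.2 hk) (by positivity)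

theorem radialWeight_sq (hb : 0 ≤ b) (hk : k ^ 2 ≤ 1) (r : ℝ) :
    radialWeight b k r ^ 2 = 1 - k ^ 2 + b * r ^ 2 :=
  sq_sqrt (radicand_nonneg hb hk r)

theorem radialWeight_nonneg (b k r : ℝ) : 0 ≤ radialWeight b k r := sqrt_nonneg _

theorem radialWeight_pos (hb : 0 < b) (hk : k ^ 2 ≤ 1) {r : ℝ} (hr : r ≠ 0) :
    0 < radialWeight b k r :=
  sqrt_pos.2 (radicand_pos hb hk hr)

theorem radialWeight_of_sq_eq_one (hk : k ^ 2 = 1) {r : ℝ} (hr : 0 ≤ r) :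
    radialWeight b k r = √b * r := by
  rw [radialWeight, hk, sub_self, zero_add, sqrt_mul' b (sq_nonneg r), sqrt_sq hr]

theorem hasDerivAt_radialWeight (hb : 0 < b) (hk : k ^ 2 ≤ 1) {r : ℝ} (hr : r ≠ 0) :
    HasDerivAt (radialWeight b k) (b * r / radialWeight b k r) r := by
  refine ((((hasDerivAt_pow 2 r).const_mul b).const_add (1 - k ^ 2)).sqrt
    (radicand_pos hb hk hr).ne').congr_deriv ?_
  rw [radialWeight]
  field_simp
  norm_num

theorem hasDerivAt_potential_norm {V : Type*} [NormedAddCommGroup V] [InnerProductSpace ℝ V]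
    (hb : b ≠ 0) {γ : ℝ → V} {v : V} {t : ℝ} (h : HasDerivAt γ v t) :
    HasDerivAt (fun τ => potential b k ‖γ τ‖) (radialWeight b k ‖γ t‖ * inner ℝ (γ t) v) t := by
  have hpow := ((h.norm_sq.const_mul b).const_add (1 - k ^ 2)).rpow_const (p := 3 / 2)
    (Or.inr (by norm_num))
  refine (hpow.div_const (3 * b)).congr_deriv ?_
  rw [radialWeight, sqrt_eq_rpow]
  norm_num
  field_simp

theorem contDiff_potential_norm {V : Type*} [NormedAddCommGroup V] [InnerProductSpace ℝ V] :
    ContDiff ℝ 1 (fun p : V => potential b k ‖p‖) := by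
  have hpow : ContDiff ℝ (1 : ℕ) (fun x : ℝ => x ^ (3 / 2 : ℝ)) :=
    contDiff_rpow_const_of_le (by norm_num)
  have hrad : ContDiff ℝ 1 (fun p : V => 1 - k ^ 2 + b * ‖p‖ ^ 2) :=
    contDiff_const.add (contDiff_const.mul (contDiff_norm_sq ℝ))
  exact (hpow.comp hrad).div_const _

theorem potential_zero_le (hb : 0 ≤ b) (hk : k ^ 2 ≤ 1) (r : ℝ) :
    potential b k 0 ≤ potential b k r := by
  have hle : 1 - k ^ 2 + b * 0 ^ 2 ≤ 1 - k ^ 2 + b * r ^ 2 := by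
    gcongr 1 - k ^ 2 + b * ?_
    simpa using sq_nonneg r
  exact div_le_div_of_nonneg_right
    (rpow_le_rpow (radicand_nonneg hb hk 0) hle (by norm_num)) (by positivity)

theorem calibratedEnergy_nonneg (hb : 0 ≤ b) (hk : k ^ 2 ≤ 1) {A : ℝ} (hkA : 0 ≤ k * A) (R : ℝ) :
    0 ≤ calibratedEnergy b k R A := by
  have := potential_zero_le hb hk R
  rw [calibratedEnergy]
  linarith

theorem sq_factor_mul_norm (hb : 0 ≤ b) (hk : k ^ 2 ≤ 1) (p v : Plane) :
    (factor b p * ‖v‖) ^ 2 = calibration b k p v ^ 2 + conjugateCalibration b k p v ^ 2 := by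
  have hpyth := planeOrientation.inner_sq_add_areaForm_sq p v
  have hw := radialWeight_sq hb hk ‖p‖
  rw [mul_pow, factor_sq hb, calibration, conjugateCalibration]
  linear_combination
    -(k ^ 2 + radialWeight b k ‖p‖ ^ 2) * hpyth - ‖p‖ ^ 2 * ‖v‖ ^ 2 * hw

theorem factor_mul_norm_nonneg (b : ℝ) (p v : Plane) : 0 ≤ factor b p * ‖v‖ :=
  mul_nonneg (factor_nonneg b p) (norm_nonneg v)

theorem abs_calibration_le (hb : 0 ≤ b) (hk : k ^ 2 ≤ 1) (p v : Plane) :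
    |calibration b k p v| ≤ factor b p * ‖v‖ := by
  refine abs_le_of_sq_le_sq ?_ (factor_mul_norm_nonneg b p v)
  rw [sq_factor_mul_norm hb hk]
  exact le_add_of_nonneg_right (sq_nonneg _)

theorem conjugateCalibration_eq_zero (hb : 0 ≤ b) (hk : k ^ 2 ≤ 1) {p v : Plane}
    (h : calibration b k p v = factor b p * ‖v‖) : conjugateCalibration b k p v = 0 := by
  have hsq := sq_factor_mul_norm hb hk p v
  rwa [h, left_eq_add, sq_eq_zero_iff] at hsq

theorem factor_mul_norm_le_calibration_add (hb : 0 ≤ b) (hk : k ^ 2 ≤ 1) {p v : Plane} {d : ℝ}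
    (hd : 0 ≤ d) (hcal : 0 ≤ calibration b k p v)
    (hconj : conjugateCalibration b k p v ^ 2 ≤ 2 * d * calibration b k p v) :
    factor b p * ‖v‖ ≤ calibration b k p v + d := by
  refine le_of_sq_le_sq ?_ (add_nonneg hcal hd)
  rw [sq_factor_mul_norm hb hk]
  linarith [sq_nonneg d, add_sq (calibration b k p v) d]

theorem deriv_norm_of_conjugateCalibration_eq_zero (hk : k ^ 2 = 1) {γ : ℝ → Plane} {t : ℝ}
    (hγ : DifferentiableAt ℝ γ t) (h : conjugateCalibration b k (γ t) (deriv γ t) = 0) :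
    deriv (fun τ => ‖γ τ‖) t = -(2 * k * √b) * areaDensity γ t := by
  rw [areaDensity_eq_areaForm]
  rcases eq_or_ne (γ t) 0 with h0 | h0
  · simp [deriv_norm_comp_of_eq_zero h0, h0]
  rw [conjugateCalibration, radialWeight_of_sq_eq_one hk (norm_nonneg _)] at h
  rw [(hasDerivAt_norm_comp hγ.hasDerivAt h0).deriv, div_eq_iff (norm_ne_zero_iff.2 h0)]
  linear_combination k * h - inner ℝ (γ t) (deriv γ t) * hk

end Calibration

namespace Admissible

variable {b k A s e : ℝ} {p₀ : Plane} {γ : ℝ → Plane}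

theorem ae_differentiableAt (h : Admissible p₀ A s e γ) :
    ∀ᵐ t ∂volume.restrict (Icc s e), DifferentiableAt ℝ γ t :=
  ae_differentiableAt_of_locallyLipschitzOn_Ico h.locallyLipschitzOn

theorem aestronglyMeasurable (h : Admissible p₀ A s e γ) :
    AEStronglyMeasurable γ (volume.restrict (Icc s e)) :=
  h.continuousOn.aestronglyMeasurable measurableSet_Icc

theorem aestronglyMeasurable_calibration (h : Admissible p₀ A s e γ) (b k : ℝ) :
    AEStronglyMeasurable (fun t => calibration b k (γ t) (deriv γ t))
      (volume.restrict (Icc s e)) := by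
  have hradial : AEStronglyMeasurable
      (fun t => radialWeight b k ‖γ t‖ * inner ℝ (γ t) (deriv γ t)) (volume.restrict (Icc s e)) :=
    ((continuous_radialWeight b k).comp_aestronglyMeasurable h.aestronglyMeasurable.norm).mul
      (h.aestronglyMeasurable.inner (measurable_deriv γ).aestronglyMeasurable)
  refine ((h.area_integrable.aestronglyMeasurable.const_mul (2 * k)).sub hradial).congr
    (Eventually.of_forall fun t => ?_)
  simp only [Pi.sub_apply, areaDensity_eq_areaForm, calibration]
  ring

theorem integrableOn_energyDensity (h : Admissible p₀ A s e γ) (hE : energy b s e γ ≠ ⊤) :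
    IntegrableOn (fun t => factor b (γ t) * ‖deriv γ t‖) (Icc s e) := by
  refine ⟨((continuous_factor b).comp_aestronglyMeasurable h.aestronglyMeasurable).mul
    (measurable_deriv γ).aestronglyMeasurable.norm, ?_⟩
  rw [hasFiniteIntegral_iff_ofReal (Eventually.of_forall fun _ => factor_mul_norm_nonneg _ _ _)]
  exact hE.lt_top

theorem energy_eq_ofReal_integral (h : Admissible p₀ A s e γ) (hE : energy b s e γ ≠ ⊤) :
    energy b s e γ = ENNReal.ofReal (∫ t in Icc s e, factor b (γ t) * ‖deriv γ t‖) :=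
  (ofReal_integral_eq_lintegral_ofReal (h.integrableOn_energyDensity hE)
    (Eventually.of_forall fun _ => factor_mul_norm_nonneg _ _ _)).symm

theorem integrableOn_calibration (hb : 0 ≤ b) (hk : k ^ 2 ≤ 1) (h : Admissible p₀ A s e γ)
    (hE : energy b s e γ ≠ ⊤) :
    IntegrableOn (fun t => calibration b k (γ t) (deriv γ t)) (Icc s e) :=
  (h.integrableOn_energyDensity hE).mono' (h.aestronglyMeasurable_calibration b k)
    (Eventually.of_forall fun _ => abs_calibration_le hb hk _ _)

theorem integral_calibration (hb : b ≠ 0) (h : Admissible p₀ A s e γ)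
    (hcal : IntegrableOn (fun t => calibration b k (γ t) (deriv γ t)) (Icc s e)) :
    ∫ t in Icc s e, calibration b k (γ t) (deriv γ t) = calibratedEnergy b k ‖p₀‖ A := by
  have hderiv : deriv (fun τ => potential b k ‖γ τ‖) =ᵐ[volume.restrict (Icc s e)]
      fun t => 2 * k * areaDensity γ t - calibration b k (γ t) (deriv γ t) := by
    filter_upwards [h.ae_differentiableAt] with t ht
    rw [(hasDerivAt_potential_norm hb ht.hasDerivAt).deriv, areaDensity_eq_areaForm, calibration]
    ring
  have harea := h.area_integrable.const_mul (2 * k)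
  have hpot : ContDiff ℝ 1 (fun p : Plane => potential b k ‖p‖) := contDiff_potential_norm
  have hlip : LocallyLipschitzOn (Ico s e) (fun τ => potential b k ‖γ τ‖) :=
    locallyLipschitzOn_comp (g := fun p => potential b k ‖p‖) hpot.locallyLipschitz
      h.locallyLipschitzOn
  have hftc := integral_deriv_eq_sub_of_locallyLipschitzOn_Ico h.le
    (hpot.continuous.comp_continuousOn' h.continuousOn) hlip
    ((harea.sub hcal).congr hderiv.symm)
  rw [integral_congr_ae hderiv, integral_sub harea hcal, integral_const_mul, h.area_eq,
    h.start_eq, h.end_eq, norm_zero] at hftc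
  rw [calibratedEnergy]
  linarith

theorem ofReal_calibratedEnergy_le_energy (hb : 0 < b) (hk : k ^ 2 ≤ 1)
    (h : Admissible p₀ A s e γ) :
    ENNReal.ofReal (calibratedEnergy b k ‖p₀‖ A) ≤ energy b s e γ := by
  by_cases hE : energy b s e γ = ⊤
  · exact hE ▸ le_top
  have hcal := h.integrableOn_calibration hb.le hk hE
  rw [h.energy_eq_ofReal_integral hE, ← h.integral_calibration hb.ne' hcal]
  exact ENNReal.ofReal_le_ofReal (integral_mono hcal (h.integrableOn_energyDensity hE)
    fun t => (le_abs_self _).trans (abs_calibration_le hb.le hk _ _))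

theorem energy_le_ofReal_calibratedEnergy_add (hb : b ≠ 0) (h : Admissible p₀ A s e γ)
    (hcal : IntegrableOn (fun t => calibration b k (γ t) (deriv γ t)) (Icc s e)) {d : ℝ}
    (hle : ∀ᵐ t ∂volume.restrict (Icc s e),
      factor b (γ t) * ‖deriv γ t‖ ≤ calibration b k (γ t) (deriv γ t) + d) :
    energy b s e γ ≤ ENNReal.ofReal (calibratedEnergy b k ‖p₀‖ A + (e - s) * d) := by
  have hadd : IntegrableOn (fun t => calibration b k (γ t) (deriv γ t) + d) (Icc s e) :=
    hcal.add (integrable_const d)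
  have hint : ∫ t in Icc s e, (calibration b k (γ t) (deriv γ t) + d) =
      calibratedEnergy b k ‖p₀‖ A + (e - s) * d := by
    rw [integral_add hcal (integrable_const d), h.integral_calibration hb hcal]
    simp [h.le]
  calc energy b s e γ
      ≤ ∫⁻ t in Icc s e, ENNReal.ofReal (calibration b k (γ t) (deriv γ t) + d) :=
        lintegral_mono_ae (hle.mono fun t ht => ENNReal.ofReal_le_ofReal ht)
    _ = ENNReal.ofReal (calibratedEnergy b k ‖p₀‖ A + (e - s) * d) := by
        rw [← hint, ofReal_integral_eq_lintegral_ofReal hadd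
          (hle.mono fun t ht => (factor_mul_norm_nonneg _ _ _).trans ht)]

theorem ae_conjugateCalibration_eq_zero (hb : 0 < b) (hk : k ^ 2 ≤ 1)
    (h : Admissible p₀ A s e γ) (hnonneg : 0 ≤ calibratedEnergy b k ‖p₀‖ A)
    (hE : energy b s e γ ≤ ENNReal.ofReal (calibratedEnergy b k ‖p₀‖ A)) :
    ∀ᵐ t ∂volume.restrict (Icc s e), conjugateCalibration b k (γ t) (deriv γ t) = 0 := by
  have hE' : energy b s e γ ≠ ⊤ := ne_top_of_le_ne_top ENNReal.ofReal_ne_top hE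
  have hcal := h.integrableOn_calibration hb.le hk hE'
  have hdens := h.integrableOn_energyDensity hE'
  have hle : ∀ t, calibration b k (γ t) (deriv γ t) ≤ factor b (γ t) * ‖deriv γ t‖ :=
    fun t => (le_abs_self _).trans (abs_calibration_le hb.le hk _ _)
  rw [h.energy_eq_ofReal_integral hE', ENNReal.ofReal_le_ofReal_iff hnonneg,
    ← h.integral_calibration hb.ne' hcal] at hE
  have heq := (integral_eq_iff_of_ae_le hcal hdens (Eventually.of_forall hle)).1
    (le_antisymm (integral_mono hcal hdens hle) hE)
  exact heq.mono fun t ht => conjugateCalibration_eq_zero hb.le hk ht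

theorem mul_area_eq_of_energy_le (hb : 0 < b) (hk : k ^ 2 = 1) (h : Admissible p₀ A s e γ)
    (hnonneg : 0 ≤ calibratedEnergy b k ‖p₀‖ A)
    (hE : energy b s e γ ≤ ENNReal.ofReal (calibratedEnergy b k ‖p₀‖ A)) :
    k * A = ‖p₀‖ / (2 * √b) := by
  have hderiv : deriv (fun t => ‖γ t‖) =ᵐ[volume.restrict (Icc s e)]
      fun t => -(2 * k * √b) * areaDensity γ t := by
    filter_upwards [h.ae_conjugateCalibration_eq_zero hb hk.le hnonneg hE,
      h.ae_differentiableAt] with t hconj hγ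
    exact deriv_norm_of_conjugateCalibration_eq_zero hk hγ hconj
  have hftc := integral_deriv_eq_sub_of_locallyLipschitzOn_Ico h.le h.continuousOn.norm
    (locallyLipschitzOn_comp lipschitzWith_one_norm.locallyLipschitz h.locallyLipschitzOn)
    ((h.area_integrable.const_mul _).congr hderiv.symm)
  rw [integral_congr_ae hderiv, integral_const_mul, h.area_eq, h.start_eq, h.end_eq,
    norm_zero] at hftc
  rw [eq_div_iff (by positivity)]
  linarith

end Admissible

section Spiral

/-- The angle swept up to time `t` by a curve whose radius is `R - t` and whose angular momentum
at radius `r` is `g r`. -/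
noncomputable def sweep (R : ℝ) (g : ℝ → ℝ) (t : ℝ) : ℝ :=
  ∫ τ in 0..t, g (R - τ) / (R - τ) ^ 2

/-- The curve from `p₀` into the origin, parametrized by `[0, ‖p₀‖]`, whose radius decreases with
unit speed and whose angular momentum `r² θ'` at radius `r` is `g r`. -/
noncomputable def spiral (p₀ : Plane) (g : ℝ → ℝ) (t : ℝ) : Plane :=
  ((‖p₀‖ - t) / ‖p₀‖) • planeOrientation.rotation (sweep ‖p₀‖ g t) p₀

variable {p₀ : Plane} {g : ℝ → ℝ} {R t : ℝ}

theorem continuousOn_div_sq_comp_sub (hg : ContinuousOn g (Ioi 0)) :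
    ContinuousOn (fun τ => g (R - τ) / (R - τ) ^ 2) (Iio R) :=
  (hg.comp (by fun_prop) fun _ hτ => sub_pos.2 hτ).div (by fun_prop)
    fun _ hτ => pow_ne_zero 2 (sub_pos.2 hτ).ne'

theorem hasDerivAt_sweep (hR : 0 < R) (hg : ContinuousOn g (Ioi 0)) (ht : t < R) :
    HasDerivAt (sweep R g) (g (R - t) / (R - t) ^ 2) t := by
  have hc := continuousOn_div_sq_comp_sub (R := R) hg
  have hsub : uIcc 0 t ⊆ Iio R := fun _ hx => hx.2.trans_lt (max_lt hR ht)
  exact intervalIntegral.integral_hasDerivAt_right (hc.mono hsub).intervalIntegrable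
    (hc.stronglyMeasurableAtFilter isOpen_Iio t ht) (hc.continuousAt (Iio_mem_nhds ht))

theorem contDiffOn_sweep (hR : 0 < R) (hg : ContinuousOn g (Ioi 0)) :
    ContDiffOn ℝ 1 (sweep R g) (Iio R) := by
  rw [← zero_add (1 : WithTop ℕ∞), contDiffOn_succ_iff_deriv_of_isOpen isOpen_Iio,
    contDiffOn_zero]
  exact ⟨fun t ht => (hasDerivAt_sweep hR hg ht).differentiableAt.differentiableWithinAt,
    by simp, (continuousOn_div_sq_comp_sub hg).congr fun t ht => (hasDerivAt_sweep hR hg ht).deriv⟩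

theorem contDiffOn_spiral (hp₀ : p₀ ≠ 0) (hg : ContinuousOn g (Ioi 0)) :
    ContDiffOn ℝ 1 (spiral p₀ g) (Iio ‖p₀‖) := by
  have hradius : ContDiffOn ℝ 1 (fun t : ℝ => (‖p₀‖ - t) / ‖p₀‖) (Iio ‖p₀‖) := by fun_prop
  exact hradius.smul ((contDiff_rotation planeOrientation p₀).comp_contDiffOn
    (contDiffOn_sweep (norm_pos_iff.2 hp₀) hg))

theorem hasDerivAt_spiral (hp₀ : p₀ ≠ 0) (hg : ContinuousOn g (Ioi 0)) (ht : t < ‖p₀‖) :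
    HasDerivAt (spiral p₀ g) ((g (‖p₀‖ - t) / (‖p₀‖ - t) ^ 2) • J (spiral p₀ g t) -
      (‖p₀‖ - t)⁻¹ • spiral p₀ g t) t := by
  have hr : ‖p₀‖ - t ≠ 0 := (sub_pos.2 ht).ne'
  have hradius : HasDerivAt (fun τ => (‖p₀‖ - τ) / ‖p₀‖) (-1 / ‖p₀‖) t :=
    ((hasDerivAt_id t).const_sub ‖p₀‖).div_const _
  refine (hradius.smul ((hasDerivAt_rotation planeOrientation p₀ _).scomp t
    (hasDerivAt_sweep (norm_pos_iff.2 hp₀) hg ht))).congr_deriv ?_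
  simp only [spiral, map_smul, Function.comp_apply]
  match_scalars <;> field_simp

theorem norm_spiral (hp₀ : p₀ ≠ 0) (g : ℝ → ℝ) (t : ℝ) : ‖spiral p₀ g t‖ = |‖p₀‖ - t| := by
  rw [spiral, norm_smul, LinearIsometryEquiv.norm_map, norm_eq_abs, abs_div, abs_norm,
    div_mul_cancel₀ _ (norm_ne_zero_iff.2 hp₀)]

theorem spiral_zero (hp₀ : p₀ ≠ 0) (g : ℝ → ℝ) : spiral p₀ g 0 = p₀ := by
  simp [spiral, sweep, hp₀]

theorem spiral_norm (p₀ : Plane) (g : ℝ → ℝ) : spiral p₀ g ‖p₀‖ = 0 := by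
  simp [spiral]

theorem inner_spiral_deriv (hp₀ : p₀ ≠ 0) (hg : ContinuousOn g (Ioi 0)) (ht : t < ‖p₀‖) :
    inner ℝ (spiral p₀ g t) (deriv (spiral p₀ g) t) = -(‖p₀‖ - t) := by
  have hr : ‖p₀‖ - t ≠ 0 := (sub_pos.2 ht).ne'
  rw [(hasDerivAt_spiral hp₀ hg ht).deriv, inner_sub_right, real_inner_smul_right,
    real_inner_smul_right, real_inner_self_eq_norm_sq, norm_spiral hp₀, sq_abs,
    Orientation.inner_rightAngleRotation_right, Orientation.areaForm_apply_self]
  field_simp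
  ring

theorem areaForm_spiral_deriv (hp₀ : p₀ ≠ 0) (hg : ContinuousOn g (Ioi 0)) (ht : t < ‖p₀‖) :
    ω (spiral p₀ g t) (deriv (spiral p₀ g) t) = g (‖p₀‖ - t) := by
  have hr : ‖p₀‖ - t ≠ 0 := (sub_pos.2 ht).ne'
  rw [(hasDerivAt_spiral hp₀ hg ht).deriv, map_sub, map_smul, map_smul,
    Orientation.areaForm_rightAngleRotation_right, Orientation.areaForm_apply_self,
    real_inner_self_eq_norm_sq, norm_spiral hp₀, sq_abs]
  simp [hr]

theorem continuousOn_spiral (hp₀ : p₀ ≠ 0) (hg : ContinuousOn g (Ioi 0)) :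
    ContinuousOn (spiral p₀ g) (Iic ‖p₀‖) := by
  refine continuousOn_of_forall_continuousAt fun t ht => ?_
  rcases (mem_Iic.1 ht).lt_or_eq with hlt | rfl
  · exact (contDiffOn_spiral hp₀ hg).continuousOn.continuousAt (Iio_mem_nhds hlt)
  · rw [ContinuousAt, spiral_norm, tendsto_zero_iff_norm_tendsto_zero]
    simp_rw [norm_spiral hp₀]
    exact Continuous.tendsto' (by fun_prop) _ _ (by simp)

theorem admissible_spiral (hp₀ : p₀ ≠ 0) (hg : ContinuousOn g (Ioi 0))
    (hi : IntervalIntegrable g volume 0 ‖p₀‖) :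
    Admissible p₀ (1 / 2 * ∫ r in 0..‖p₀‖, g r) 0 ‖p₀‖ (spiral p₀ g) := by
  have harea : areaDensity (spiral p₀ g) =ᵐ[volume.restrict (Icc 0 ‖p₀‖)]
      fun t => 1 / 2 * g (‖p₀‖ - t) := by
    filter_upwards [ae_restrict_Icc_mem_Ioo volume] with t ht
    rw [areaDensity_eq_areaForm, areaForm_spiral_deriv hp₀ hg ht.2]
  exact
    { le := norm_nonneg p₀
      continuousOn := (continuousOn_spiral hp₀ hg).mono fun t ht => ht.2
      locallyLipschitzOn :=
        ((contDiffOn_spiral hp₀ hg).locallyLipschitzOn (convex_Iio _)).mono fun t ht => ht.2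
      start_eq := spiral_zero hp₀ g
      end_eq := spiral_norm p₀ g
      area_integrable := ((integrableOn_Icc_comp_sub_left (norm_nonneg p₀) hi).const_mul
        (1 / 2)).congr harea.symm
      area_eq := by
        rw [integral_congr_ae harea, integral_const_mul,
          integral_Icc_comp_sub_left g (norm_nonneg p₀)] }

theorem calibration_spiral (hp₀ : p₀ ≠ 0) (hg : ContinuousOn g (Ioi 0)) (ht : t < ‖p₀‖)
    (b k : ℝ) : calibration b k (spiral p₀ g t) (deriv (spiral p₀ g) t) =
      k * g (‖p₀‖ - t) + radialWeight b k (‖p₀‖ - t) * (‖p₀‖ - t) := by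
  rw [calibration, areaForm_spiral_deriv hp₀ hg ht, inner_spiral_deriv hp₀ hg ht,
    norm_spiral hp₀, abs_of_pos (sub_pos.2 ht)]
  ring

theorem conjugateCalibration_spiral (hp₀ : p₀ ≠ 0) (hg : ContinuousOn g (Ioi 0))
    (ht : t < ‖p₀‖) (b k : ℝ) :
    conjugateCalibration b k (spiral p₀ g t) (deriv (spiral p₀ g) t) =
      radialWeight b k (‖p₀‖ - t) * g (‖p₀‖ - t) - k * (‖p₀‖ - t) := by
  rw [conjugateCalibration, areaForm_spiral_deriv hp₀ hg ht, inner_spiral_deriv hp₀ hg ht,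
    norm_spiral hp₀, abs_of_pos (sub_pos.2 ht)]
  ring

theorem integrableOn_calibration_spiral (hp₀ : p₀ ≠ 0) (hg : ContinuousOn g (Ioi 0))
    (hi : IntervalIntegrable g volume 0 ‖p₀‖) (b k : ℝ) :
    IntegrableOn (fun t => calibration b k (spiral p₀ g t) (deriv (spiral p₀ g) t))
      (Icc 0 ‖p₀‖) := by
  have hcont : Continuous fun r => radialWeight b k r * r :=
    (continuous_radialWeight b k).mul continuous_id
  refine (integrableOn_Icc_comp_sub_left (norm_nonneg p₀)
    ((hi.const_mul k).add (hcont.intervalIntegrable _ _))).congr ?_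
  filter_upwards [ae_restrict_Icc_mem_Ioo volume] with t ht
  exact (calibration_spiral hp₀ hg ht.2 b k).symm

theorem energy_spiral_le {b k d : ℝ} (hb : 0 < b) (hk : k ^ 2 ≤ 1) (hp₀ : p₀ ≠ 0)
    (hg : ContinuousOn g (Ioi 0)) (hi : IntervalIntegrable g volume 0 ‖p₀‖) (hd : 0 ≤ d)
    (hcal : ∀ r ∈ Ioo 0 ‖p₀‖, 0 ≤ k * g r + radialWeight b k r * r)
    (hconj : ∀ r ∈ Ioo 0 ‖p₀‖, (radialWeight b k r * g r - k * r) ^ 2 ≤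
      2 * d * (k * g r + radialWeight b k r * r)) :
    energy b 0 ‖p₀‖ (spiral p₀ g) ≤ ENNReal.ofReal
      (calibratedEnergy b k ‖p₀‖ (1 / 2 * ∫ r in 0..‖p₀‖, g r) + ‖p₀‖ * d) := by
  have hle : ∀ᵐ t ∂volume.restrict (Icc 0 ‖p₀‖), factor b (spiral p₀ g t) *
      ‖deriv (spiral p₀ g) t‖ ≤ calibration b k (spiral p₀ g t) (deriv (spiral p₀ g) t) + d := by
    filter_upwards [ae_restrict_Icc_mem_Ioo volume] with t ht
    have hr : ‖p₀‖ - t ∈ Ioo 0 ‖p₀‖ := ⟨sub_pos.2 ht.2, sub_lt_self _ ht.1⟩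
    apply factor_mul_norm_le_calibration_add hb.le hk hd
    · rw [calibration_spiral hp₀ hg ht.2]
      exact hcal _ hr
    · rw [calibration_spiral hp₀ hg ht.2, conjugateCalibration_spiral hp₀ hg ht.2]
      exact hconj _ hr
  simpa only [sub_zero] using (admissible_spiral hp₀ hg hi).energy_le_ofReal_calibratedEnergy_add
    hb.ne' (integrableOn_calibration_spiral hp₀ hg hi b k) hle

end Spiral

section CalibratedSpiral

variable {b k : ℝ}

/-- The angular momentum that makes a spiral of unit radial speed tangent to the directions
calibrated by `calibration b k`. -/
noncomputable def calibratedProfile (b k r : ℝ) : ℝ := k * r / radialWeight b k r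

/-- The area enclosed by the calibrated spiral with multiplier `k` that starts at distance `R`
from the origin. -/
noncomputable def calibratedArea (b R k : ℝ) : ℝ :=
  k / (2 * b) * (radialWeight b k R - radialWeight b k 0)

theorem continuousOn_calibratedProfile (hb : 0 < b) (hk : k ^ 2 ≤ 1) :
    ContinuousOn (calibratedProfile b k) (Ioi 0) :=
  ContinuousOn.div (by fun_prop) (continuous_radialWeight b k).continuousOn
    fun _ hr => (radialWeight_pos hb hk (ne_of_gt hr)).ne'

theorem hasDerivAt_calibratedProfile_primitive (hb : 0 < b) (hk : k ^ 2 ≤ 1) {r : ℝ}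
    (hr : r ≠ 0) :
    HasDerivAt (fun r => k / b * radialWeight b k r) (calibratedProfile b k r) r := by
  refine ((hasDerivAt_radialWeight hb hk hr).const_mul (k / b)).congr_deriv ?_
  rw [calibratedProfile]
  field_simp

theorem intervalIntegrable_calibratedProfile (hb : 0 < b) (hk : k ^ 2 ≤ 1) {R : ℝ}
    (hR : 0 ≤ R) : IntervalIntegrable (calibratedProfile b k) volume 0 R := by
  have hderiv : ∀ r ∈ Ioo 0 R, HasDerivAt (radialWeight b k) (b * r / radialWeight b k r) r :=
    fun r hr => hasDerivAt_radialWeight hb hk hr.1.ne'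
  have hnonneg : ∀ r ∈ Ioo 0 R, 0 ≤ b * r / radialWeight b k r :=
    fun r hr => div_nonneg (mul_nonneg hb.le hr.1.le) (radialWeight_nonneg b k r)
  have hint := intervalIntegral.integrableOn_deriv_of_nonneg
    (continuous_radialWeight b k).continuousOn hderiv hnonneg
  rw [intervalIntegrable_iff_integrableOn_Ioc_of_le hR]
  refine IntegrableOn.congr_fun (hint.const_mul (k / b)) (fun r _ => ?_) measurableSet_Ioc
  simp only [calibratedProfile]
  field_simp

theorem integral_calibratedProfile (hb : 0 < b) (hk : k ^ 2 ≤ 1) {R : ℝ} (hR : 0 ≤ R) :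
    1 / 2 * ∫ r in 0..R, calibratedProfile b k r = calibratedArea b R k := by
  rw [intervalIntegral.integral_eq_sub_of_hasDerivAt_of_le hR
    ((continuous_radialWeight b k).const_mul (k / b)).continuousOn
    (fun r hr => hasDerivAt_calibratedProfile_primitive hb hk hr.1.ne')
    (intervalIntegrable_calibratedProfile hb hk hR), calibratedArea]
  ring

theorem continuous_calibratedArea (b R : ℝ) : Continuous (calibratedArea b R) := by
  unfold calibratedArea radialWeight
  fun_prop

theorem calibratedArea_of_sq_eq_one (hb : 0 < b) (hk : k ^ 2 = 1) {R : ℝ} (hR : 0 ≤ R) :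
    calibratedArea b R k = k * (R / (2 * √b)) := by
  rw [calibratedArea, radialWeight_of_sq_eq_one hk hR, radialWeight_of_sq_eq_one hk le_rfl]
  have hsq : √b ^ 2 = b := sq_sqrt hb.le
  field_simp
  simp [hsq]

theorem exists_calibratedArea_eq (hb : 0 < b) {R A : ℝ} (hR : 0 ≤ R)
    (hA : |A| ≤ R / (2 * √b)) : ∃ k : ℝ, k ^ 2 ≤ 1 ∧ calibratedArea b R k = A := by
  have hmem : A ∈ Icc (calibratedArea b R (-1)) (calibratedArea b R 1) := by
    rw [calibratedArea_of_sq_eq_one hb (by norm_num) hR,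
      calibratedArea_of_sq_eq_one hb (by norm_num) hR, neg_one_mul, one_mul]
    exact abs_le.1 hA
  obtain ⟨k, hk, hkA⟩ := intermediate_value_Icc (by norm_num)
    (continuous_calibratedArea b R).continuousOn hmem
  exact ⟨k, sq_le_one_iff_abs_le_one k |>.2 (abs_le.2 hk), hkA⟩

theorem isMinimizer_spiral_calibratedProfile (hb : 0 < b) (hk : k ^ 2 ≤ 1) {p₀ : Plane}
    (hp₀ : p₀ ≠ 0) : IsMinimizer b p₀ (calibratedArea b ‖p₀‖ k) 0 ‖p₀‖
      (spiral p₀ (calibratedProfile b k)) := by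
  have hg := continuousOn_calibratedProfile hb hk
  have hi := intervalIntegrable_calibratedProfile hb hk (norm_nonneg p₀)
  have hcal : ∀ r ∈ Ioo 0 ‖p₀‖, 0 ≤ k * calibratedProfile b k r + radialWeight b k r * r := by
    intro r hr
    have hw := radialWeight_pos hb hk hr.1.ne'
    have hr₀ := hr.1
    rw [calibratedProfile, show k * (k * r / radialWeight b k r) =
      k ^ 2 * r / radialWeight b k r by ring]
    positivity
  have hconj : ∀ r ∈ Ioo 0 ‖p₀‖, (radialWeight b k r * calibratedProfile b k r - k * r) ^ 2 ≤
      2 * 0 * (k * calibratedProfile b k r + radialWeight b k r * r) := by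
    intro r hr
    rw [calibratedProfile, mul_div_cancel₀ _ (radialWeight_pos hb hk hr.1.ne').ne']
    simp
  have hspiral := admissible_spiral hp₀ hg hi
  have henergy := energy_spiral_le hb hk hp₀ hg hi le_rfl hcal hconj
  rw [integral_calibratedProfile hb hk (norm_nonneg p₀)] at hspiral henergy
  rw [mul_zero, add_zero] at henergy
  exact ⟨hspiral, fun s e ζ hζ => henergy.trans (hζ.ofReal_calibratedEnergy_le_energy hb hk)⟩

end CalibratedSpiral

section Supercritical

variable {b k R B α : ℝ}

/-- A density on `(0, R)` of total mass `2 B` whose mass concentrates at the origin as `α`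
tends to `0`. -/
noncomputable def concentratedMass (R B α r : ℝ) : ℝ := 2 * B * α / R ^ α * r ^ (α - 1)

/-- The angular momentum of a competitor in the critical case `k = ±1`: to the calibrated profile
`k / √b` it adds area `B` close to the origin, where rotating costs little energy. -/
noncomputable def concentratedProfile (b k R B α r : ℝ) : ℝ :=
  k * (1 / √b + concentratedMass R B α r)

theorem continuousOn_concentratedProfile :
    ContinuousOn (concentratedProfile b k R B α) (Ioi 0) := by
  have hpow : ContinuousOn (fun r : ℝ => r ^ (α - 1)) (Ioi 0) :=
    continuousOn_id.rpow_const fun r hr => Or.inl (ne_of_gt hr)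
  exact continuousOn_const.mul (continuousOn_const.add (continuousOn_const.mul hpow))

theorem intervalIntegrable_concentratedMass (hα : 0 < α) :
    IntervalIntegrable (concentratedMass R B α) volume 0 R :=
  (intervalIntegral.intervalIntegrable_rpow' (by linarith)).const_mul _

theorem integral_concentratedMass (hR : 0 < R) (hα : 0 < α) :
    ∫ r in 0..R, concentratedMass R B α r = 2 * B := by
  simp only [concentratedMass]
  rw [intervalIntegral.integral_const_mul, integral_rpow (Or.inl (by linarith)), sub_add_cancel,
    zero_rpow hα.ne', sub_zero]
  have := rpow_pos_of_pos hR α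
  field_simp

theorem intervalIntegrable_concentratedProfile (hα : 0 < α) :
    IntervalIntegrable (concentratedProfile b k R B α) volume 0 R :=
  (intervalIntegrable_const.add (intervalIntegrable_concentratedMass hα)).const_mul k

theorem integral_concentratedProfile (hR : 0 < R) (hα : 0 < α) :
    1 / 2 * ∫ r in 0..R, concentratedProfile b k R B α r = k * (R / (2 * √b) + B) := by
  simp only [concentratedProfile]
  rw [intervalIntegral.integral_const_mul, intervalIntegral.integral_add intervalIntegrable_const
    (intervalIntegrable_concentratedMass hα), integral_concentratedMass hR hα,
    intervalIntegral.integral_const, smul_eq_mul, sub_zero]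
  ring

theorem concentratedMass_nonneg (hR : 0 ≤ R) (hB : 0 ≤ B) (hα : 0 ≤ α) {r : ℝ} (hr : 0 ≤ r) :
    0 ≤ concentratedMass R B α r := by
  unfold concentratedMass
  positivity

theorem sq_mul_concentratedMass_le (hB : 0 ≤ B) (hα : 0 ≤ α) {r : ℝ} (hr : r ∈ Ioo 0 R) :
    r ^ 2 * concentratedMass R B α r ≤ 2 * B * α * R := by
  obtain ⟨hr₀, hrR⟩ := hr
  have hR : 0 < R := hr₀.trans hrR
  have hpow : r ^ α ≤ R ^ α := rpow_le_rpow hr₀.le hrR.le hα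
  calc r ^ 2 * concentratedMass R B α r
      = 2 * B * α * (r ^ α / R ^ α) * r := by
        rw [concentratedMass, rpow_sub_one hr₀.ne']
        field_simp
    _ ≤ 2 * B * α * 1 * R := by
        gcongr
        exact div_le_one_of_le₀ hpow (by positivity)
    _ = 2 * B * α * R := by ring

theorem concentratedMass_le_calibration (hk : k ^ 2 = 1) {r : ℝ} (hr : 0 ≤ r) :
    concentratedMass R B α r ≤ k * concentratedProfile b k R B α r + radialWeight b k r * r := by
  have hrest : 0 ≤ 1 / √b + √b * r * r := by positivity
  rw [concentratedProfile, radialWeight_of_sq_eq_one hk hr]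
  linear_combination hrest - (1 / √b + concentratedMass R B α r) * hk

theorem sq_conjugateCalibration_concentratedProfile (hb : 0 < b) (hk : k ^ 2 = 1) {r : ℝ}
    (hr : 0 ≤ r) : (radialWeight b k r * concentratedProfile b k R B α r - k * r) ^ 2 =
      b * (r ^ 2 * concentratedMass R B α r) * concentratedMass R B α r := by
  have hresidual : radialWeight b k r * concentratedProfile b k R B α r - k * r =
      k * √b * r * concentratedMass R B α r := by
    rw [concentratedProfile, radialWeight_of_sq_eq_one hk hr]
    field_simp
    ring
  rw [hresidual, mul_pow, mul_pow, mul_pow, hk, sq_sqrt hb.le]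
  ring

theorem energy_spiral_concentratedProfile_le {p₀ : Plane} (hb : 0 < b) (hk : k ^ 2 = 1)
    (hp₀ : p₀ ≠ 0) (hB : 0 ≤ B) (hα : 0 < α) :
    energy b 0 ‖p₀‖ (spiral p₀ (concentratedProfile b k ‖p₀‖ B α)) ≤ ENNReal.ofReal
      (calibratedEnergy b k ‖p₀‖ (k * (‖p₀‖ / (2 * √b) + B)) + α * (b * B * ‖p₀‖ ^ 2)) := by
  have hmass : ∀ r ∈ Ioo 0 ‖p₀‖, 0 ≤ concentratedMass ‖p₀‖ B α r :=
    fun r hr => concentratedMass_nonneg (norm_nonneg p₀) hB hα.le hr.1.le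
  have hconj : ∀ r ∈ Ioo 0 ‖p₀‖,
      (radialWeight b k r * concentratedProfile b k ‖p₀‖ B α r - k * r) ^ 2 ≤
        2 * (b * B * α * ‖p₀‖) *
          (k * concentratedProfile b k ‖p₀‖ B α r + radialWeight b k r * r) := by
    intro r hr
    rw [sq_conjugateCalibration_concentratedProfile hb hk hr.1.le]
    refine mul_le_mul ?_ (concentratedMass_le_calibration hk hr.1.le) (hmass r hr) (by positivity)
    linear_combination b * sq_mul_concentratedMass_le hB hα.le hr
  refine (energy_spiral_le hb hk.le hp₀ continuousOn_concentratedProfile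
    (intervalIntegrable_concentratedProfile hα) (by positivity)
    (fun r hr => (hmass r hr).trans (concentratedMass_le_calibration hk hr.1.le)) hconj).trans_eq ?_
  rw [integral_concentratedProfile (norm_pos_iff.2 hp₀) hα]
  ring_nf

theorem exists_admissible_energy_le {p₀ : Plane} {A ε : ℝ} (hb : 0 < b) (hk : k ^ 2 = 1)
    (hp₀ : p₀ ≠ 0) (hA : ‖p₀‖ / (2 * √b) < k * A) (hε : 0 < ε) :
    ∃ (s e : ℝ) (γ : ℝ → Plane), Admissible p₀ A s e γ ∧
      energy b s e γ ≤ ENNReal.ofReal (calibratedEnergy b k ‖p₀‖ A + ε) := by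
  have hR : 0 < ‖p₀‖ := norm_pos_iff.2 hp₀
  obtain ⟨B, hB, hAB⟩ : ∃ B, 0 < B ∧ k * (‖p₀‖ / (2 * √b) + B) = A :=
    ⟨k * A - ‖p₀‖ / (2 * √b), sub_pos.2 hA, by linear_combination A * hk⟩
  have hα : 0 < ε / (b * B * ‖p₀‖ ^ 2) := by positivity
  have hadm := admissible_spiral (g := concentratedProfile b k ‖p₀‖ B _) hp₀
    continuousOn_concentratedProfile (intervalIntegrable_concentratedProfile hα)
  have henergy := energy_spiral_concentratedProfile_le hb hk hp₀ hB.le hα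
  rw [integral_concentratedProfile hR hα, hAB] at hadm
  rw [hAB, div_mul_cancel₀ _ (by positivity)] at henergy
  exact ⟨_, _, _, hadm, henergy⟩

theorem energy_le_ofReal_calibratedEnergy_of_isMinimizer {p₀ : Plane} {A s e : ℝ} {γ : ℝ → Plane}
    (hb : 0 < b) (hk : k ^ 2 = 1) (hp₀ : p₀ ≠ 0) (hA : ‖p₀‖ / (2 * √b) < k * A)
    (hγ : IsMinimizer b p₀ A s e γ) :
    energy b s e γ ≤ ENNReal.ofReal (calibratedEnergy b k ‖p₀‖ A) := by
  refine ENNReal.le_of_forall_pos_le_add fun ε hε _ => ?_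
  obtain ⟨s', e', ζ, hζ, henergy⟩ := exists_admissible_energy_le hb hk hp₀ hA (NNReal.coe_pos.2 hε)
  calc energy b s e γ ≤ energy b s' e' ζ := hγ.2 s' e' ζ hζ
    _ ≤ ENNReal.ofReal (calibratedEnergy b k ‖p₀‖ A + ε) := henergy
    _ ≤ ENNReal.ofReal (calibratedEnergy b k ‖p₀‖ A) + ε :=
      ENNReal.ofReal_add_le.trans_eq (by rw [ENNReal.ofReal_coe_nnreal])

theorem mul_area_le_of_isMinimizer {p₀ : Plane} {A s e : ℝ} {γ : ℝ → Plane} (hb : 0 < b)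
    (hk : k ^ 2 = 1) (hp₀ : p₀ ≠ 0) (hγ : IsMinimizer b p₀ A s e γ) :
    k * A ≤ ‖p₀‖ / (2 * √b) := by
  by_contra! hA
  have hkA : 0 ≤ k * A := hA.le.trans' (by positivity)
  exact hA.ne' (hγ.1.mul_area_eq_of_energy_le hb hk (calibratedEnergy_nonneg hb.le hk.le hkA _)
    (energy_le_ofReal_calibratedEnergy_of_isMinimizer hb hk hp₀ hA hγ))

end Supercritical

end OneWell

theorem one_well_existence_iff (b : ℝ) (hb : 0 < b) (p₀ : OneWell.Plane) (hp₀ : p₀ ≠ 0) (A : ℝ) :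
    (∃ (s e : ℝ) (γ : ℝ → OneWell.Plane), OneWell.IsMinimizer b p₀ A s e γ) ↔
      |A| ≤ ‖p₀‖ / (2 * Real.sqrt b) := by
  constructor
  · rintro ⟨s, e, γ, hγ⟩
    rw [abs_le']
    exact ⟨by simpa using OneWell.mul_area_le_of_isMinimizer (k := 1) hb (by norm_num) hp₀ hγ,
      by simpa using OneWell.mul_area_le_of_isMinimizer (k := -1) hb (by norm_num) hp₀ hγ⟩
  · intro hA
    obtain ⟨k, hk, rfl⟩ := OneWell.exists_calibratedArea_eq hb (norm_nonneg p₀) hA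
    exact ⟨_, _, _, OneWell.isMinimizer_spiral_calibratedProfile hb hk hp₀⟩
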